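/- Then the leading-order density is unchanged by the update: ρ₀ⁿ⁺¹ = ρ₀ⁿ, and it is a constant function on ℝ^d. (Use that ∇ρ₀ⁿ⁺¹ = 0 from the O(ε^{-2}) balance, integrate the O(ε⁰) mass update over one periodicity cell, and use periodicity to eliminate the flux term.) -/

import Mathlib

/-!
The scheme is an identity between functions of `ε` which, at a fixed point `x`, extend continuously
to `ε = 0` (after multiplication by `ε²` in the case of the momentum equation), because all fields
are jointly smooth in `(ε, x)` near `ε = 0`, where the density is positive
(`continuousAt_pder_param`). Letting `ε → 0⁺` therefore extracts the leading-order balances.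

Since `ρ₀ⁿ` is constant, the `O(ε⁻²)` momentum balance reduces to `∇ρ₀ⁿ⁺¹ = 0`, so `ρ₀ⁿ⁺¹` is
constant. The `O(ε⁰)` mass balance then says that the periodic field `ρ₀ⁿ⁺¹ u₀ⁿ⁺¹` has the constant
divergence `-(ρ₀ⁿ⁺¹ - ρ₀ⁿ)/Δt`. By the divergence theorem on the unit cube, where the fluxes through
opposite faces cancel, a constant divergence of a periodic field is zero
(`eq_zero_of_divg_eq_const`).
-/

open Real

/-- Spatial partial derivative in direction `i`. -/
noncomputable def pder {d : ℕ} (f : (Fin d → ℝ) → ℝ) (i : Fin d) (x : Fin d → ℝ) : ℝ :=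
  fderiv ℝ f x (Pi.single i 1)

/-- Spatial divergence of a vector field on `ℝ^d`. -/
noncomputable def divg {d : ℕ} (w : (Fin d → ℝ) → (Fin d → ℝ)) (x : Fin d → ℝ) : ℝ :=
  ∑ i, pder (fun y => w y i) i x

open Filter Topology MeasureTheory

/-- If `F` is jointly `C¹` near `(0, x)`, the spatial derivative of `F ε` at `x` is continuous in
the parameter `ε` at `ε = 0`. -/
lemma continuousAt_pder_param {d : ℕ} {F : ℝ → (Fin d → ℝ) → ℝ} {x : Fin d → ℝ}
    (hF : ContDiffAt ℝ 1 (fun p : ℝ × (Fin d → ℝ) => F p.1 p.2) (0, x)) (i : Fin d) :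
    ContinuousAt (fun ε => pder (F ε) i x) 0 := by
  have h : ContDiffAt ℝ 0 (fun ε => fderiv ℝ (F ε) x) 0 :=
    ContDiffAt.fderiv (f := F) (g := fun _ => x) hF contDiffAt_const (by norm_num)
  exact h.continuousAt.clm_apply continuousAt_const

lemma eq_of_pder_eq_zero {d : ℕ} {f : (Fin d → ℝ) → ℝ} (hf : Differentiable ℝ f)
    (h : ∀ x i, pder f i x = 0) (x y : Fin d → ℝ) : f x = f y := by
  refine is_const_of_fderiv_eq_zero hf (fun z => ?_) x y
  refine ContinuousLinearMap.coe_injective (LinearMap.pi_ext' fun i => LinearMap.ext_ring ?_)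
  simpa [pder] using h z i

lemma mul_add_add_eq_zero {e A B P Q : ℝ} (he : e ≠ 0)
    (h : A + B + 1 / e * P + 1 / e * Q = 0) : e * (A + B) + P + Q = 0 := by
  field_simp at h
  linarith

/-- A function continuous at `0` and vanishing on `(0, 1]` vanishes at `0`. -/
lemma eq_zero_of_continuousAt {f : ℝ → ℝ} (hf : ContinuousAt f 0)
    (h : ∀ ε ∈ Set.Ioc (0 : ℝ) 1, f ε = 0) : f 0 = 0 := by
  have h1 : Tendsto f (𝓝[>] 0) (𝓝 (f 0)) := hf.tendsto.mono_left nhdsWithin_le_nhds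
  have h2 : f =ᶠ[𝓝[>] 0] fun _ => 0 := by
    filter_upwards [Ioc_mem_nhdsGT (zero_lt_one' ℝ)] with ε hε using h ε hε
  exact tendsto_nhds_unique (h1.congr' h2) tendsto_const_nhds

/-- If a periodic `C¹` field has constant divergence, the constant is zero. -/
lemma eq_zero_of_divg_eq_const {d : ℕ} {w : (Fin d → ℝ) → (Fin d → ℝ)} {K : ℝ}
    (hw : ContDiff ℝ 1 w)
    (hper : ∀ (x : Fin d → ℝ) (z : Fin d → ℤ), w (x + fun i => (z i : ℝ)) = w x)
    (hK : ∀ x, divg w x = K) : K = 0 := by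
  cases d with
  | zero => simpa [divg] using (hK 0).symm
  | succ n =>
    have hwi : ∀ i, ContDiff ℝ 1 (fun y => w y i) := fun i => contDiff_pi.1 hw i
    have hK' : ∀ x, ∑ i, fderiv ℝ (fun y => w y i) x (Pi.single i 1) = K := hK
    have key := integral_divergence_of_hasFDerivAt_off_countable'
      (0 : Fin (n + 1) → ℝ) 1 zero_le_one (fun i y => w y i)
      (fun i x => fderiv ℝ (fun y => w y i) x) ∅ Set.countable_empty
      (fun i => (hwi i).continuous.continuousOn)
      (fun x _ i => ((hwi i).differentiable (by norm_num) x).hasFDerivAt)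
      (by
        simp only [hK']
        exact continuousOn_const.integrableOn_compact isCompact_Icc)
    -- opposite faces of the unit cube differ by a lattice vector
    have hface : ∀ (i : Fin (n + 1)) (x : Fin n → ℝ),
        w (i.insertNth ((1 : Fin (n + 1) → ℝ) i) x)
          = w (i.insertNth ((0 : Fin (n + 1) → ℝ) i) x) := by
      intro i x
      rw [← hper (i.insertNth ((0 : Fin (n + 1) → ℝ) i) x) (Pi.single i 1)]
      congr 1
      ext j
      refine Fin.succAboveCases i ?_ (fun k => ?_) j <;> simp
    simp only [hK', hface, sub_self, Finset.sum_const_zero] at key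
    simpa [Measure.real, Real.volume_Icc_pi_toReal (zero_le_one' (Fin (n + 1) → ℝ))] using key

/-- if well-prepared, ℤ^d-periodic data `ρⁿ_ε = ρ₀ⁿ + ε²ρ₂ⁿ`,
`qⁿ_ε = ρⁿ_ε(u₀ⁿ + ε u₁ⁿ)` (with `∇ρ₀ⁿ = 0`, `∇·u₀ⁿ = 0`) are updated by the
first-order time semi-discrete scheme to `ρⁿ⁺¹_ε = ρ₀ⁿ⁺¹ + ε²ρ₂ⁿ⁺¹`,
`qⁿ⁺¹_ε = ρⁿ⁺¹_ε(u₀ⁿ⁺¹ + ε u₁ⁿ⁺¹)` for every `ε ∈ (0,1]`, then the leading-order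
density is unchanged by the update, `ρ₀ⁿ⁺¹ = ρ₀ⁿ`, and it is a constant function. -/
theorem scheme_leading_density_unchanged_and_constant
    {d : ℕ} (Δt γ : ℝ) (hΔt : 0 < Δt) (hγ : 1 ≤ γ)
    (r0n r2n : (Fin d → ℝ) → ℝ) (u0n u1n : (Fin d → ℝ) → (Fin d → ℝ))
    (r0p r2p : (Fin d → ℝ) → ℝ) (u0p u1p : (Fin d → ℝ) → (Fin d → ℝ))
    (hr0n : ContDiff ℝ (⊤ : ℕ∞) r0n) (hr2n : ContDiff ℝ (⊤ : ℕ∞) r2n)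
    (hu0n : ContDiff ℝ (⊤ : ℕ∞) u0n) (hu1n : ContDiff ℝ (⊤ : ℕ∞) u1n)
    (hr0p : ContDiff ℝ (⊤ : ℕ∞) r0p) (hr2p : ContDiff ℝ (⊤ : ℕ∞) r2p)
    (hu0p : ContDiff ℝ (⊤ : ℕ∞) u0p) (hu1p : ContDiff ℝ (⊤ : ℕ∞) u1p)
    (hr0npos : ∀ x, 0 < r0n x) (hr0ppos : ∀ x, 0 < r0p x)
    -- ℤ^d-periodicity of all coefficient functions
    (hperR : ∀ f ∈ [r0n, r2n, r0p, r2p], ∀ (x : Fin d → ℝ) (z : Fin d → ℤ),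
      f (x + fun i => (z i : ℝ)) = f x)
    (hperU : ∀ g ∈ [u0n, u1n, u0p, u1p], ∀ (x : Fin d → ℝ) (z : Fin d → ℤ),
      g (x + fun i => (z i : ℝ)) = g x)
    -- well-preparedness of the data at time tⁿ: ∇ρ₀ⁿ = 0 and ∇·u₀ⁿ = 0
    (hwp1 : ∀ (x : Fin d → ℝ) (i : Fin d), pder r0n i x = 0)
    (hwp2 : ∀ x : Fin d → ℝ, divg u0n x = 0)
    -- mass update of the first-order time semi-discrete scheme, for every ε ∈ (0,1]
    (mass : ∀ ε ∈ Set.Ioc (0 : ℝ) 1, ∀ x : Fin d → ℝ,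
      ((r0p x + ε ^ 2 * r2p x) - (r0n x + ε ^ 2 * r2n x)) / Δt
        + divg (fun y i => (r0p y + ε ^ 2 * r2p y) * (u0p y i + ε * u1p y i)) x = 0)
    -- momentum update of the first-order time semi-discrete scheme, for every ε ∈ (0,1]
    (mom : ∀ ε ∈ Set.Ioc (0 : ℝ) 1, ∀ (x : Fin d → ℝ) (j : Fin d),
      ((r0p x + ε ^ 2 * r2p x) * (u0p x j + ε * u1p x j)
          - (r0n x + ε ^ 2 * r2n x) * (u0n x j + ε * u1n x j)) / Δt
        + (∑ i, pder (fun y =>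
            ((r0n y + ε ^ 2 * r2n y) * (u0n y j + ε * u1n y j))
              * ((r0n y + ε ^ 2 * r2n y) * (u0n y i + ε * u1n y i))
              / (r0n y + ε ^ 2 * r2n y)) i x)
        + (1 / ε ^ 2) * pder (fun y =>
            (r0n y + ε ^ 2 * r2n y) ^ γ - (r0n y + ε ^ 2 * r2n y)) j x
        + (1 / ε ^ 2) * pder (fun y => r0p y + ε ^ 2 * r2p y) j x = 0) :
    (∀ x : Fin d → ℝ, r0p x = r0n x) ∧ (∀ x y : Fin d → ℝ, r0p x = r0p y) := by
  have hr0n' : ContDiff ℝ 1 r0n := hr0n.of_le (by exact_mod_cast le_top)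
  have hr2n' : ContDiff ℝ 1 r2n := hr2n.of_le (by exact_mod_cast le_top)
  have hu0n' : ContDiff ℝ 1 u0n := hu0n.of_le (by exact_mod_cast le_top)
  have hu1n' : ContDiff ℝ 1 u1n := hu1n.of_le (by exact_mod_cast le_top)
  have hr0p' : ContDiff ℝ 1 r0p := hr0p.of_le (by exact_mod_cast le_top)
  have hr2p' : ContDiff ℝ 1 r2p := hr2p.of_le (by exact_mod_cast le_top)
  have hu0p' : ContDiff ℝ 1 u0p := hu0p.of_le (by exact_mod_cast le_top)
  have hu1p' : ContDiff ℝ 1 u1p := hu1p.of_le (by exact_mod_cast le_top)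
  have hcn : ∀ x y, r0n x = r0n y :=
    eq_of_pder_eq_zero (hr0n'.differentiable (by norm_num)) hwp1
  have hgrad : ∀ x j, pder r0p j x = 0 := by
    intro x j
    have hne : r0n x + (0 : ℝ) ^ 2 * r2n x ≠ 0 := by simpa using (hr0npos x).ne'
    have hρ : ContDiffAt ℝ 1
        (fun p : ℝ × (Fin d → ℝ) => r0n p.2 + p.1 ^ 2 * r2n p.2) (0, x) := by fun_prop
    have hconv : ∀ i, ContinuousAt (fun ε : ℝ => pder (fun y =>
            ((r0n y + ε ^ 2 * r2n y) * (u0n y j + ε * u1n y j))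
              * ((r0n y + ε ^ 2 * r2n y) * (u0n y i + ε * u1n y i))
              / (r0n y + ε ^ 2 * r2n y)) i x) 0 := by
      intro i
      refine continuousAt_pder_param (ContDiffAt.div ?_ hρ hne) i
      fun_prop
    have hpres : ContinuousAt (fun ε : ℝ => pder (fun y =>
            (r0n y + ε ^ 2 * r2n y) ^ γ - (r0n y + ε ^ 2 * r2n y)) j x) 0 :=
      continuousAt_pder_param ((hρ.rpow_const_of_ne hne).sub hρ) j
    have hlin : ContinuousAt (fun ε : ℝ => pder (fun y => r0p y + ε ^ 2 * r2p y) j x) 0 := by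
      refine continuousAt_pder_param ?_ j
      fun_prop
    -- the momentum equation multiplied by `ε ^ 2`
    have hlim := eq_zero_of_continuousAt (f := fun ε : ℝ =>
      ε ^ 2 * (((r0p x + ε ^ 2 * r2p x) * (u0p x j + ε * u1p x j)
          - (r0n x + ε ^ 2 * r2n x) * (u0n x j + ε * u1n x j)) / Δt
        + (∑ i, pder (fun y =>
            ((r0n y + ε ^ 2 * r2n y) * (u0n y j + ε * u1n y j))
              * ((r0n y + ε ^ 2 * r2n y) * (u0n y i + ε * u1n y i))
              / (r0n y + ε ^ 2 * r2n y)) i x))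
        + pder (fun y =>
            (r0n y + ε ^ 2 * r2n y) ^ γ - (r0n y + ε ^ 2 * r2n y)) j x
        + pder (fun y => r0p y + ε ^ 2 * r2p y) j x)
      (by
        refine ContinuousAt.add (ContinuousAt.add (ContinuousAt.mul (by fun_prop)
          (ContinuousAt.add (by fun_prop) ?_)) hpres) hlin
        exact tendsto_finsetSum _ fun i _ => hconv i)
      (by
        intro ε hε
        have hε0 : ε ^ 2 ≠ 0 := pow_ne_zero 2 hε.1.ne'
        have h := mom ε hε x j
        exact mul_add_add_eq_zero hε0 h)
    have hconst : (fun y => r0n y ^ γ - r0n y) = fun _ => r0n x ^ γ - r0n x :=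
      funext fun y => by rw [hcn y x]
    have hzero : pder (fun y => r0n y ^ γ - r0n y) j x = 0 := by
      rw [hconst]
      simp [pder]
    simpa [hzero] using hlim
  have hcp : ∀ x y, r0p x = r0p y :=
    eq_of_pder_eq_zero (hr0p'.differentiable (by norm_num)) hgrad
  have hmass0 : ∀ x, (r0p x - r0n x) / Δt + divg (fun y i => r0p y * u0p y i) x = 0 := by
    intro x
    have hlim := eq_zero_of_continuousAt (f := fun ε : ℝ =>
      ((r0p x + ε ^ 2 * r2p x) - (r0n x + ε ^ 2 * r2n x)) / Δt
        + divg (fun y i => (r0p y + ε ^ 2 * r2p y) * (u0p y i + ε * u1p y i)) x)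
      (by
        refine ContinuousAt.add (by fun_prop) ?_
        refine tendsto_finsetSum _ fun i _ => ?_
        refine continuousAt_pder_param
          (F := fun ε y => (r0p y + ε ^ 2 * r2p y) * (u0p y i + ε * u1p y i)) ?_ i
        fun_prop)
      (fun ε hε => mass ε hε x)
    simpa using hlim
  refine ⟨fun x => ?_, hcp⟩
  have hK : -((r0p x - r0n x) / Δt) = 0 := by
    refine eq_zero_of_divg_eq_const (w := fun y i => r0p y * u0p y i) (by fun_prop) ?_ ?_
    · intro y z
      ext i
      rw [hperR r0p (by simp) y z, hperU u0p (by simp) y z]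
    · intro y
      have h := hmass0 y
      rw [hcp y x, hcn y x] at h
      linarith
  have h0 : r0p x - r0n x = 0 := by
    simpa [hΔt.ne'] using hK
  linarith
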